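/- Define integer arrays z(n,k) and r(n,k) recursively as follows: z(n,k) = 0 for k < 0 or k > n, z(n,n) = (2n-1)!! for n ≥ 0, and z(n,k) = n·z(n-1,k) + (n+k-1)·z(n-1,k-1) for 1 ≤ k < n; r(n,k) satisfies Shor's recursion r(n,k) = (n-1)·r(n-1,k) + (n+k-2)·r(n-1,k-1) with r(1,0) = 1, r(1,k) = 0 for k ≠ 0, and r(n,k) = 0 for k < 0 or k ≥ n. Then z(n,k) = r(n+1,k) for all integers 0 ≤ k ≤ n. -/

import Mathlib

/-- The array `z(n,k)` : `z(n,k) = 0` for `k > n` (and for `k < 0`, encoded by dropping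
the `z(n-1, k-1)` term when `k = 0`), `z(n,n) = (2n-1)!!` for `n ≥ 0`, and
`z(n,k) = n·z(n-1,k) + (n+k-1)·z(n-1,k-1)` for `1 ≤ k < n`. -/
def zArr : ℕ → ℕ → ℕ
  | 0, k => if k = 0 then Nat.doubleFactorial (2 * 0 - 1) else 0
  | n + 1, k =>
    if n + 1 < k then 0
    else if k = n + 1 then Nat.doubleFactorial (2 * (n + 1) - 1)
    else (n + 1) * zArr n k +
      (if k = 0 then 0 else ((n + 1) + k - 1) * zArr n (k - 1))

/-- Shor's array `r(n,k)` : `r(1,0) = 1`, `r(1,k) = 0` for `k ≠ 0`, `r(n,k) = 0` for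
`k ≥ n` (and for `k < 0`, encoded by dropping the `r(n-1, k-1)` term when `k = 0`), and
`r(n,k) = (n-1)·r(n-1,k) + (n+k-2)·r(n-1,k-1)`. -/
def rArr : ℕ → ℕ → ℕ
  | 0, _ => 0
  | 1, k => if k = 0 then 1 else 0
  | n + 2, k =>
    if n + 2 ≤ k then 0
    else ((n + 2) - 1) * rArr (n + 1) k +
      (if k = 0 then 0 else ((n + 2) + k - 2) * rArr (n + 1) (k - 1))

/-!
Only the diagonal `k = n + 1` needs an argument. There `z` is given by a closed form rather than by
its recursion, but `(2n+1)!! = (2n+1) · (2n-1)!!` and `z(n,n+1) = 0` show that the recursion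
`z(n+1,k) = (n+1)·z(n,k) + (n+k)·z(n,k-1)` persists. It is Shor's recursion for `r(n+2,k)`, so both
arrays are determined by the same recursion and the same initial row.
-/

open scoped Nat

lemma zArr_self (n : ℕ) : zArr n n = (2 * n - 1)‼ := by
  cases n <;> simp [zArr]

lemma zArr_eq_zero_of_lt {n k : ℕ} (h : n < k) : zArr n k = 0 := by
  cases n with
  | zero => simp [zArr, h.ne']
  | succ n => simp [zArr, h]

lemma rArr_eq_zero_of_le {n k : ℕ} (h : n ≤ k) : rArr n k = 0 := by
  match n with
  | 0 => rfl
  | 1 => simp [rArr, Nat.one_le_iff_ne_zero.mp h]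
  | n + 2 => simp [rArr, h]

lemma zArr_succ_zero (n : ℕ) : zArr (n + 1) 0 = (n + 1) * zArr n 0 := by
  simp [zArr]

lemma rArr_add_two_zero (n : ℕ) : rArr (n + 2) 0 = (n + 1) * rArr (n + 1) 0 := by
  simp [rArr]

lemma zArr_succ_succ (n k : ℕ) :
    zArr (n + 1) (k + 1) = (n + 1) * zArr n (k + 1) + (n + k + 1) * zArr n k := by
  rcases lt_trichotomy k n with hlt | rfl | hgt
  · have hcoeff : n + 1 + (k + 1) - 1 = n + k + 1 := by lia
    simp [zArr, hlt.ne, hlt.le, hcoeff]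
  · calc zArr (k + 1) (k + 1) = (2 * k + 1)‼ := zArr_self (k + 1)
      _ = (2 * k + 1) * (2 * k - 1)‼ := Nat.doubleFactorial_add_one (2 * k)
      _ = (k + k + 1) * zArr k k := by rw [zArr_self, two_mul]
      _ = (k + 1) * zArr k (k + 1) + (k + k + 1) * zArr k k := by
        rw [zArr_eq_zero_of_lt k.lt_succ_self, mul_zero, zero_add]
  · simp [zArr_eq_zero_of_lt, hgt, hgt.trans k.lt_succ_self]

lemma rArr_add_two_succ (n k : ℕ) :
    rArr (n + 2) (k + 1) = (n + 1) * rArr (n + 1) (k + 1) + (n + k + 1) * rArr (n + 1) k := by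
  rcases le_or_gt k n with hle | hgt
  · have hcoeff : n + 2 + (k + 1) - 2 = n + k + 1 := by lia
    simp [rArr, hle, hcoeff]
  · simp [rArr_eq_zero_of_le, hgt, hgt.le]

theorem z_eq_r_general (n k : ℕ) : zArr n k = rArr (n + 1) k := by
  induction n generalizing k with
  | zero => simp [zArr, rArr]
  | succ n ih =>
    cases k with
    | zero => rw [zArr_succ_zero, rArr_add_two_zero, ih]
    | succ k => rw [zArr_succ_succ, rArr_add_two_succ, ih, ih]

/-- `z(n,k) = r(n+1,k)` for all `0 ≤ k ≤ n`. -/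
theorem z_eq_r (n k : ℕ) (hkn : k ≤ n) : zArr n k = rArr (n + 1) k :=
  z_eq_r_general n k
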